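/- Let m ≥ 2 and n > 0, let k^DE = (n/m, ..., n/m) ∈ ℝ^m be the uniform allocation vector, and for 1 ≤ t ≤ m let k^(t) ∈ ℝ^m be the allocation vector whose t-th entry is n and all other entries are 0. Then for every allocation vector k* (with k*_t ≥ 0 and ∑_{t=1}^m k*_t = n): 0 ≤ ‖k^DE − k*‖₁ ≤ (1/m)·∑_{t=1}^m ‖k^(t) − k*‖₁ = 2n − 2n/m. -/

import Mathlib

open Finset

/-- **Theorem 1(ii).** For `m ≥ 2` and `n > 0`, with `k^DE = (n/m, …, n/m)` the uniform
allocation and `k^(t)` the single allocations (`n` in position `t`, else `0`), every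
allocation vector `k*` satisfies
`0 ≤ ‖k^DE − k*‖₁ ≤ (1/m) ∑_t ‖k^(t) − k*‖₁ = 2n − 2n/m`. -/
theorem kDE_dist_le_expected_single_dist
    (m : ℕ) (hm : 2 ≤ m) (n : ℝ) (hn : 0 < n)
    (kstar : Fin m → ℝ) (hkstar : ∀ s, 0 ≤ kstar s) (hkstarsum : ∑ s, kstar s = n) :
    0 ≤ ∑ t : Fin m, |n / m - kstar t| ∧
    ∑ t : Fin m, |n / m - kstar t|
      ≤ (1 / m) * ∑ t : Fin m, ∑ s : Fin m, |(if s = t then n else 0) - kstar s| ∧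
    (1 / m) * ∑ t : Fin m, ∑ s : Fin m, |(if s = t then n else 0) - kstar s|
      = 2 * n - 2 * (n / m) := by
  have hm0 : (0 : ℝ) < m := by
    have : 0 < m := by omega
    exact_mod_cast this
  refine ⟨Finset.sum_nonneg fun _ _ => abs_nonneg _, ?_, ?_⟩
  · rw [Finset.sum_comm, Finset.mul_sum]
    refine Finset.sum_le_sum fun s _ => ?_
    have h1 : n / m - kstar s
        = (1 / m) * ∑ t : Fin m, ((if s = t then n else 0) - kstar s) := by
      rw [Finset.sum_sub_distrib, Finset.sum_ite_eq]
      simp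
      field_simp
    rw [h1, abs_mul, abs_of_pos (by positivity : (0 : ℝ) < 1 / m)]
    exact mul_le_mul_of_nonneg_left (Finset.abs_sum_le_sum_abs _ _) (by positivity)
  · have h2 : ∀ t : Fin m, ∑ s : Fin m, |(if s = t then n else 0) - kstar s|
        = 2 * n - 2 * kstar t := by
      intro t
      have h3 : ∀ s : Fin m, |(if s = t then n else 0) - kstar s|
          = kstar s + (if s = t then n - 2 * kstar s else 0) := by
        intro s
        have h4 : kstar s ≤ n := by
          rw [← hkstarsum]
          exact Finset.single_le_sum (fun i _ => hkstar i) (Finset.mem_univ s)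
        split_ifs
        · rw [abs_of_nonneg (by linarith)]; ring
        · rw [zero_sub, abs_neg, abs_of_nonneg (hkstar s), add_zero]
      rw [Finset.sum_congr rfl fun s _ => h3 s, Finset.sum_add_distrib, hkstarsum,
        Finset.sum_ite_eq']
      simp
      ring
    rw [Finset.sum_congr rfl fun t _ => h2 t, Finset.sum_sub_distrib, ← Finset.mul_sum, ← Finset.mul_sum, hkstarsum]
    simp
    field_simp
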